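/- Let q be a prime power and let 3 ≤ h ≤ k be integers, and let D_4 = { x ∈ 𝔽_q^k \ {0} : x_1·x_2·⋯·x_h = 0 }. Then: (a) n := #D_4 = q^{k−h}(q^h − (q−1)^h) − 1; (b) if h < k, then every α ∈ 𝔽_q^k having a nonzero coordinate among positions h+1, …, k satisfies #{ P ∈ D_4 : ⟨α,P⟩ ≠ 0 } = n − q^{k−1} + q^{k−h−1}(q−1)^h + 1, and there are exactly q^k − q^h such α; (c) for every s ∈ {1, …, h}, every α ∈ 𝔽_q^k with α_m = 0 for all m > h and with exactly s nonzero coordinates among the first h satisfies #{ P ∈ D_4 : ⟨α,P⟩ ≠ 0 } = n − q^{k−1} + q^{k−h}(q−1)^{h−s}ψ_s + 1, and there are exactly C(h,s)·(q−1)^s such α. -/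

import Mathlib

/-- `ψ_s = ((q-1)^s + (-1)^s (q-1))/q` (an exact integer division). -/
def psi (q s : ℕ) : ℤ := (((q : ℤ) - 1) ^ s + (-1) ^ s * ((q : ℤ) - 1)) / (q : ℤ)

/-!
Adjoining `0` to the defining set gives the complement of the set of vectors all of whose
coordinates on `J = {1, …, h}` are nonzero. Every weight is thus determined by the number of such
vectors orthogonal to `α`, and orthogonality of additive characters evaluates `q` times that number
as `∏ i, (q - [i ∈ J]) + (q - 1) * ∏ i, (q * [α i = 0] - [i ∈ J])`. The second product vanishes as
soon as `α` has a nonzero coordinate off `J`; otherwise it only depends on how many coordinates of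
`α` are nonzero.
-/

open Finset

lemma mul_psi (q s : ℕ) :
    (q : ℤ) * psi q s = ((q : ℤ) - 1) ^ s + (-1) ^ s * ((q : ℤ) - 1) := by
  have hpow : (q : ℤ) ∣ ((q : ℤ) - 1) ^ s - (-1) ^ s := by
    simpa using sub_dvd_pow_sub_pow ((q : ℤ) - 1) (-1) s
  obtain ⟨c, hc⟩ := hpow
  exact Int.mul_ediv_cancel' ⟨c + (-1) ^ s, by linear_combination hc⟩

section Support

variable {ι R : Type*} [Fintype ι] [Zero R] [DecidableEq R]

lemma support_mem_powersetCard_iff {J : Finset ι} {s : ℕ} {α : ι → R} :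
    ({i | α i ≠ 0} : Finset ι) ∈ powersetCard s J ↔
      (∀ i ∉ J, α i = 0) ∧ #{i ∈ J | α i ≠ 0} = s := by
  classical
  have hsub : ({i | α i ≠ 0} : Finset ι) ⊆ J ↔ ∀ i ∉ J, α i = 0 := by
    simp only [subset_iff, mem_filter_univ]
    exact forall_congr' fun i => not_imp_comm
  rw [mem_powersetCard, hsub]
  refine and_congr_right fun hα => ?_
  rw [← inter_eq_right.2 (hsub.2 hα), inter_filter, inter_univ]

variable [DecidableEq ι]

lemma prod_ite_sub_ite_of_support_subset {K : Type*} [CommRing K] (q : K) {J : Finset ι}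
    {α : ι → R} (hα : ∀ i ∉ J, α i = 0) :
    ∏ i, ((if α i = 0 then q else 0) - if i ∈ J then 1 else 0) =
      (q - 1) ^ (#J - #{i ∈ J | α i ≠ 0}) * (-1) ^ #{i ∈ J | α i ≠ 0} *
        q ^ (Fintype.card ι - #J) := by
  have hzero : #{i ∈ J | α i = 0} = #J - #{i ∈ J | α i ≠ 0} :=
    Nat.eq_sub_of_add_eq (card_filter_add_card_filter_not _)
  have hin : ∏ i ∈ J, ((if α i = 0 then q else 0) - if i ∈ J then 1 else 0) =
      (q - 1) ^ (#J - #{i ∈ J | α i ≠ 0}) * (-1) ^ #{i ∈ J | α i ≠ 0} := by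
    rw [← hzero, ← prod_const, ← prod_const, ← prod_ite]
    exact prod_congr rfl fun i hi => by split_ifs <;> simp
  have hout : ∏ i ∈ Jᶜ, ((if α i = 0 then q else 0) - if i ∈ J then 1 else 0) =
      q ^ (Fintype.card ι - #J) := by
    rw [← card_compl, ← prod_const]
    exact prod_congr rfl fun i hi => by simp [mem_compl.1 hi, hα i (mem_compl.1 hi)]
  rw [← prod_mul_prod_compl J, hin, hout]

variable [Fintype R]

lemma card_filter_forall_notMem_eq_zero (J : Finset ι) :
    #{α : ι → R | ∀ i ∉ J, α i = 0} = Fintype.card R ^ #J := by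
  have hpi : ({α : ι → R | ∀ i ∉ J, α i = 0} : Finset _) =
      Fintype.piFinset fun i => if i ∈ J then univ else {0} := by
    ext α
    simp only [mem_filter_univ, Fintype.mem_piFinset]
    refine forall_congr' fun i => ?_
    split_ifs with hi <;> simp [hi]
  simp [hpi, Fintype.card_piFinset, apply_ite]

lemma card_filter_exists_notMem_ne_zero (J : Finset ι) :
    #{α : ι → R | ∃ i ∉ J, α i ≠ 0} =
      Fintype.card R ^ Fintype.card ι - Fintype.card R ^ #J := by
  have hcompl : ({α : ι → R | ∃ i ∉ J, α i ≠ 0} : Finset _) =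
      ({α : ι → R | ∀ i ∉ J, α i = 0} : Finset _)ᶜ := by
    ext α
    simp
  rw [hcompl, card_compl, card_filter_forall_notMem_eq_zero, Fintype.card_fun]

lemma card_filter_support_eq (S : Finset ι) :
    #{α : ι → R | ({i | α i ≠ 0} : Finset ι) = S} = (Fintype.card R - 1) ^ #S := by
  have hpi : ({α : ι → R | ({i | α i ≠ 0} : Finset ι) = S} : Finset _) =
      Fintype.piFinset fun i => if i ∈ S then {0}ᶜ else {0} := by
    ext α
    simp only [mem_filter_univ, Fintype.mem_piFinset, Finset.ext_iff]
    refine forall_congr' fun i => ?_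
    split_ifs with hi <;> simp [hi]
  simp [hpi, Fintype.card_piFinset, apply_ite, card_compl]

lemma card_filter_support_mem (P : Finset (Finset ι)) :
    #{α : ι → R | ({i | α i ≠ 0} : Finset ι) ∈ P} = ∑ S ∈ P, (Fintype.card R - 1) ^ #S := by
  rw [card_eq_sum_card_fiberwise (f := fun α : ι → R => ({i | α i ≠ 0} : Finset ι))
    fun α hα => by simpa using hα]
  refine sum_congr rfl fun S hS => ?_
  rw [← card_filter_support_eq, filter_filter]
  congr! 2 with α
  exact and_iff_right_of_imp fun h => h ▸ hS

lemma card_filter_support_subset_card_eq (J : Finset ι) (s : ℕ) :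
    #{α : ι → R | (∀ i ∉ J, α i = 0) ∧ #{i ∈ J | α i ≠ 0} = s} =
      (#J).choose s * (Fintype.card R - 1) ^ s := by
  simp_rw [← support_mem_powersetCard_iff, card_filter_support_mem]
  rw [sum_congr rfl fun S hS => by rw [(mem_powersetCard.1 hS).2], sum_const, card_powersetCard,
    smul_eq_mul]

end Support

section CharacterSums

lemma addChar_sum_eq_prod {ι A M : Type*} [AddCommMonoid A] [CommMonoid M] (χ : AddChar A M)
    (s : Finset ι) (f : ι → A) : χ (∑ i ∈ s, f i) = ∏ i ∈ s, χ (f i) :=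
  map_prod χ.toMonoidHom (fun i => Multiplicative.ofAdd (f i)) s

variable {R R' : Type*} [CommRing R] [Fintype R] [DecidableEq R] [CommRing R'] [IsDomain R']
  {χ : AddChar R R'}

lemma sum_compl_zero_mulShift (hχ : χ.IsPrimitive) (b : R) :
    ∑ a ∈ {0}ᶜ, χ (a * b) = (if b = 0 then (Fintype.card R : R') else 0) - 1 := by
  have hsum := AddChar.sum_mulShift b hχ
  rw [Fintype.sum_eq_add_sum_compl 0, zero_mul, AddChar.map_zero_eq_one] at hsum
  push_cast at hsum
  exact eq_sub_of_add_eq' hsum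

lemma card_mul_card_filter_dotProduct_eq_zero {ι : Type*} [Fintype ι] [DecidableEq ι]
    (hχ : χ.IsPrimitive) (A : ι → Finset R) (α : ι → R) :
    (Fintype.card R : R') * #{x ∈ Fintype.piFinset A | α ⬝ᵥ x = 0} =
      ∑ t, ∏ i, ∑ a ∈ A i, χ (a * (t * α i)) := by
  have hchar (t : R) (x : ι → R) : χ (t * α ⬝ᵥ x) = ∏ i, χ (x i * (t * α i)) := by
    rw [dotProduct, mul_sum, addChar_sum_eq_prod]
    exact prod_congr rfl fun i _ => by congr 1; ring
  calc (Fintype.card R : R') * #{x ∈ Fintype.piFinset A | α ⬝ᵥ x = 0}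
      = ∑ x ∈ Fintype.piFinset A, ∑ t, χ (t * α ⬝ᵥ x) := by
        simp_rw [AddChar.sum_mulShift _ hχ, card_filter, Nat.cast_sum, mul_sum]
        exact sum_congr rfl fun x _ => by split_ifs <;> simp
    _ = ∑ t, ∏ i, ∑ a ∈ A i, χ (a * (t * α i)) := by
        simp_rw [hchar, prod_univ_sum]
        exact sum_comm

end CharacterSums

section NonvanishingOn

variable {F ι : Type*} [Field F] [Fintype F] [DecidableEq F] [Fintype ι] [DecidableEq ι]

variable (F) in
/-- The vectors all of whose coordinates on `J` are nonzero, written as a box `∏ i, A i` so that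
character sums over it factor. -/
def nonvanishingOn (J : Finset ι) : Finset (ι → F) :=
  Fintype.piFinset fun i => if i ∈ J then {0}ᶜ else univ

lemma mem_nonvanishingOn {J : Finset ι} {x : ι → F} :
    x ∈ nonvanishingOn F J ↔ ∏ i ∈ J, x i ≠ 0 := by
  rw [nonvanishingOn, Fintype.mem_piFinset, prod_ne_zero_iff]
  refine forall_congr' fun i => ?_
  split_ifs with hi <;> simp [hi]

lemma card_nonvanishingOn (J : Finset ι) :
    (#(nonvanishingOn F J) : ℤ) =
      (Fintype.card F : ℤ) ^ (Fintype.card ι - #J) * ((Fintype.card F : ℤ) - 1) ^ #J := by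
  simp [nonvanishingOn, Fintype.card_piFinset, apply_ite, prod_ite, filter_not, card_sdiff,
    card_compl, Nat.cast_pred Fintype.card_pos, mul_comm]

lemma card_mul_card_nonvanishingOn_filter_orthogonal (J : Finset ι) (α : ι → F) :
    (Fintype.card F : ℤ) * #{x ∈ nonvanishingOn F J | α ⬝ᵥ x = 0} =
      #(nonvanishingOn F J) + ((Fintype.card F : ℤ) - 1) *
        ∏ i, ((if α i = 0 then (Fintype.card F : ℤ) else 0) - if i ∈ J then 1 else 0) := by
  obtain ⟨χ, hχ⟩ : ∃ χ : AddChar F ℂ, χ.IsPrimitive :=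
    ⟨_, AddChar.FiniteField.primitiveChar_to_Complex_isPrimitive F⟩
  have hcoord (b : F) (i : ι) : ∑ a ∈ (if i ∈ J then {0}ᶜ else univ), χ (a * b) =
      (if b = 0 then (Fintype.card F : ℂ) else 0) - if i ∈ J then 1 else 0 := by
    by_cases hi : i ∈ J
    · simp only [if_pos hi, sum_compl_zero_mulShift hχ]
    · simp [hi, AddChar.sum_mulShift b hχ]
  have htrivial : ∏ i, ∑ a ∈ (if i ∈ J then {0}ᶜ else univ), χ (a * (0 * α i)) =
      #(nonvanishingOn F J) := by
    simp [nonvanishingOn, Fintype.card_piFinset]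
  have hnontrivial (t : F) (ht : t ∈ ({0}ᶜ : Finset F)) :
      ∏ i, ∑ a ∈ (if i ∈ J then {0}ᶜ else univ), χ (a * (t * α i)) =
        ∏ i, ((if α i = 0 then (Fintype.card F : ℂ) else 0) - if i ∈ J then 1 else 0) :=
    prod_congr rfl fun i _ => by
      simp only [hcoord, mul_eq_zero_iff_left (notMem_singleton.1 (mem_compl.1 ht))]
  apply Int.cast_injective (α := ℂ)
  push_cast
  rw [nonvanishingOn, card_mul_card_filter_dotProduct_eq_zero hχ,
    Fintype.sum_eq_add_sum_compl 0, htrivial, sum_congr rfl hnontrivial, sum_const, nsmul_eq_mul,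
    card_compl, card_singleton, Nat.cast_pred Fintype.card_pos, nonvanishingOn]

lemma card_nonvanishingOn_filter_orthogonal_of_exists {J : Finset ι} {α : ι → F}
    (hα : ∃ i ∉ J, α i ≠ 0) :
    (#{x ∈ nonvanishingOn F J | α ⬝ᵥ x = 0} : ℤ) =
      (Fintype.card F : ℤ) ^ (Fintype.card ι - #J - 1) * ((Fintype.card F : ℤ) - 1) ^ #J := by
  have hq : (Fintype.card F : ℤ) ≠ 0 := Nat.cast_ne_zero.2 Fintype.card_ne_zero
  obtain ⟨i, hiJ, hi⟩ := hα
  have hJ : Fintype.card ι - #J ≠ 0 := Nat.sub_ne_zero_of_lt (card_lt_univ_of_notMem hiJ)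
  apply mul_left_cancel₀ hq
  rw [card_mul_card_nonvanishingOn_filter_orthogonal,
    prod_eq_zero (mem_univ i) (by simp [hiJ, hi]), mul_zero, add_zero, card_nonvanishingOn,
    ← mul_assoc, mul_pow_sub_one hJ]

lemma card_filter_orthogonal {α : ι → F} (hα : α ≠ 0) :
    #{x | α ⬝ᵥ x = 0} = Fintype.card F ^ (Fintype.card ι - 1) := by
  obtain ⟨i, hi⟩ := Function.ne_iff.1 hα
  have hempty := card_nonvanishingOn_filter_orthogonal_of_exists ⟨i, notMem_empty i, hi⟩
  zify
  simpa [nonvanishingOn] using hempty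

lemma card_nonvanishingOn_filter_orthogonal_of_support_subset {J : Finset ι} {α : ι → F}
    (hα : ∀ i ∉ J, α i = 0) {s : ℕ} (hs : #{i ∈ J | α i ≠ 0} = s) :
    (#{x ∈ nonvanishingOn F J | α ⬝ᵥ x = 0} : ℤ) =
      (Fintype.card F : ℤ) ^ (Fintype.card ι - #J) * ((Fintype.card F : ℤ) - 1) ^ (#J - s) *
        psi (Fintype.card F) s := by
  have hq : (Fintype.card F : ℤ) ≠ 0 := Nat.cast_ne_zero.2 Fintype.card_ne_zero
  have hsJ : s ≤ #J := hs ▸ card_filter_le _ _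
  apply mul_left_cancel₀ hq
  rw [card_mul_card_nonvanishingOn_filter_orthogonal, prod_ite_sub_ite_of_support_subset _ hα, hs,
    card_nonvanishingOn, ← pow_sub_mul_pow _ hsJ]
  linear_combination -(Fintype.card F : ℤ) ^ (Fintype.card ι - #J) *
    ((Fintype.card F : ℤ) - 1) ^ (#J - s) * mul_psi (Fintype.card F) s

end NonvanishingOn

section DefiningSet

variable {F ι : Type*} [Field F] [Fintype F] [DecidableEq F] [Fintype ι] [DecidableEq ι]

variable (F) in
/-- The defining set of the code: the nonzero vectors with a zero coordinate on `J`. For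
`J = {1, …, h}` this is `D_4`. -/
def definingSet (J : Finset ι) : Finset (ι → F) := {x | x ≠ 0 ∧ ∏ i ∈ J, x i = 0}

lemma insert_zero_definingSet {J : Finset ι} (hJ : J.Nonempty) :
    insert 0 (definingSet F J) = (nonvanishingOn F J)ᶜ := by
  ext x
  rw [mem_insert, definingSet, mem_filter_univ, mem_compl, mem_nonvanishingOn, not_not]
  refine ⟨?_, fun hx => or_iff_not_imp_left.2 fun hx0 => ⟨hx0, hx⟩⟩
  rintro (rfl | ⟨-, hx⟩)
  · obtain ⟨j, hj⟩ := hJ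
    exact prod_eq_zero hj rfl
  · exact hx

lemma card_filter_definingSet_add_card_filter_nonvanishingOn {J : Finset ι} (hJ : J.Nonempty)
    (p : (ι → F) → Prop) [DecidablePred p] (hp : p 0) :
    #{x ∈ definingSet F J | p x} + 1 + #{x ∈ nonvanishingOn F J | p x} = #{x | p x} := by
  have hinsert : #{x ∈ definingSet F J | p x} + 1 = #{x ∈ (nonvanishingOn F J)ᶜ | p x} := by
    rw [← insert_zero_definingSet hJ, filter_insert, if_pos hp,
      card_insert_of_notMem (by simp [definingSet])]
  rw [hinsert, ← card_union_of_disjoint (disjoint_filter_filter disjoint_compl_left),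
    ← filter_union, union_comm, union_compl]

lemma card_definingSet {J : Finset ι} (hJ : J.Nonempty) :
    (#(definingSet F J) : ℤ) = (Fintype.card F : ℤ) ^ (Fintype.card ι - #J) *
      ((Fintype.card F : ℤ) ^ #J - ((Fintype.card F : ℤ) - 1) ^ #J) - 1 := by
  have hsplit := card_filter_definingSet_add_card_filter_nonvanishingOn (F := F) hJ
    (fun _ => True) trivial
  simp only [filter_true, card_univ, Fintype.card_fun] at hsplit
  zify at hsplit
  rw [card_nonvanishingOn, ← pow_sub_mul_pow _ (card_le_univ J)] at hsplit
  linear_combination hsplit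

lemma card_definingSet_filter_not_orthogonal {J : Finset ι} (hJ : J.Nonempty) {α : ι → F}
    (hα : α ≠ 0) :
    (#{x ∈ definingSet F J | α ⬝ᵥ x ≠ 0} : ℤ) =
      #(definingSet F J) - (Fintype.card F : ℤ) ^ (Fintype.card ι - 1) +
        #{x ∈ nonvanishingOn F J | α ⬝ᵥ x = 0} + 1 := by
  have hsplit := card_filter_definingSet_add_card_filter_nonvanishingOn hJ (α ⬝ᵥ · = 0)
    (dotProduct_zero α)
  have hweight := card_filter_add_card_filter_not (s := definingSet F J) (α ⬝ᵥ · = 0)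
  rw [card_filter_orthogonal hα] at hsplit
  zify at hsplit hweight
  linear_combination hweight - hsplit

lemma natCard_definingSet_filter_not_orthogonal {J : Finset ι} {D : Set (ι → F)}
    (hD : D = {x | x ≠ 0 ∧ ∏ i ∈ J, x i = 0}) (α : ι → F) :
    Nat.card {x // x ∈ D ∧ ∑ i, α i * x i ≠ 0} = #{x ∈ definingSet F J | α ⬝ᵥ x ≠ 0} :=
  Nat.subtype_card _ fun x => by simp [hD, definingSet, dotProduct]

end DefiningSet

lemma mem_map_castLEEmb_univ {h k : ℕ} (hhk : h ≤ k) {i : Fin k} :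
    i ∈ univ.map (Fin.castLEEmb hhk) ↔ (i : ℕ) < h := by
  simp only [mem_map, mem_univ, true_and]
  exact ⟨fun ⟨j, hj⟩ => hj ▸ j.isLt, fun hi => ⟨⟨i, hi⟩, rfl⟩⟩

theorem stmt17_general {F ι : Type*} [Field F] [Fintype F] [Fintype ι] {q k h n : ℕ}
    (hF : Fintype.card F = q) (hk : Fintype.card ι = k) {J : Finset ι} (hJ : #J = h) (hh : 1 ≤ h)
    {D : Set (ι → F)} (hD : D = {x | x ≠ 0 ∧ ∏ i ∈ J, x i = 0}) (hn : n = Nat.card D) :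
    ((n : ℤ) = (q : ℤ) ^ (k - h) * ((q : ℤ) ^ h - ((q : ℤ) - 1) ^ h) - 1)
    ∧ (∀ α : ι → F, (∃ i ∉ J, α i ≠ 0) →
        (Nat.card {P : ι → F // P ∈ D ∧ ∑ i, α i * P i ≠ 0} : ℤ)
          = (n : ℤ) - (q : ℤ) ^ (k - 1) + (q : ℤ) ^ (k - h - 1) * ((q : ℤ) - 1) ^ h + 1)
    ∧ Nat.card {α : ι → F // ∃ i ∉ J, α i ≠ 0} = q ^ k - q ^ h
    ∧ (∀ s : ℕ, 1 ≤ s → ∀ α : ι → F, (∀ m ∉ J, α m = 0) →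
        Nat.card {i // i ∈ J ∧ α i ≠ 0} = s →
        (Nat.card {P : ι → F // P ∈ D ∧ ∑ i, α i * P i ≠ 0} : ℤ)
          = (n : ℤ) - (q : ℤ) ^ (k - 1)
              + (q : ℤ) ^ (k - h) * ((q : ℤ) - 1) ^ (h - s) * psi q s + 1)
    ∧ ∀ s : ℕ, Nat.card {α : ι → F // (∀ m ∉ J, α m = 0) ∧
          Nat.card {i // i ∈ J ∧ α i ≠ 0} = s}
        = Nat.choose h s * (q - 1) ^ s := by
  classical
  subst hF hk hJ
  have hJ : J.Nonempty := card_pos.1 hh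
  have hnD : n = #(definingSet F J) :=
    hn.trans (Nat.subtype_card _ fun x => by simp [hD, definingSet])
  have hsupport (α : ι → F) : Nat.card {i // i ∈ J ∧ α i ≠ 0} = #{i ∈ J | α i ≠ 0} :=
    Nat.subtype_card _ fun i => mem_filter
  refine ⟨hnD ▸ card_definingSet hJ, fun α hα => ?_, ?_, fun s hs α hα hαs => ?_, fun s => ?_⟩
  · have hα0 : α ≠ 0 := Function.ne_iff.2 (hα.imp fun _ => And.right)
    rw [natCard_definingSet_filter_not_orthogonal hD, hnD,
      card_definingSet_filter_not_orthogonal hJ hα0,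
      card_nonvanishingOn_filter_orthogonal_of_exists hα]
  · rw [← card_filter_exists_notMem_ne_zero]
    exact Nat.subtype_card _ fun α => mem_filter_univ α
  · have hα0 : α ≠ 0 := by
      rintro rfl
      exact Nat.ne_of_lt hs (by simpa using hαs)
    rw [natCard_definingSet_filter_not_orthogonal hD, hnD,
      card_definingSet_filter_not_orthogonal hJ hα0,
      card_nonvanishingOn_filter_orthogonal_of_support_subset hα (hsupport α ▸ hαs)]
  · rw [← card_filter_support_subset_card_eq]
    exact Nat.subtype_card _ fun α => by rw [mem_filter_univ, hsupport]

theorem stmt17 (q : ℕ) (F : Type*) [Field F] [Fintype F] (hF : Fintype.card F = q)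
    (k h : ℕ) (hh : 3 ≤ h) (hhk : h ≤ k)
    (D4 : Set (Fin k → F))
    (hD4 : D4 = {x | x ≠ 0 ∧ ∏ i : Fin h, x (Fin.castLE hhk i) = 0})
    (n : ℕ) (hn : n = Nat.card D4) :
    -- (a)
    ((n : ℤ) = (q : ℤ) ^ (k - h) * ((q : ℤ) ^ h - ((q : ℤ) - 1) ^ h) - 1)
    ∧
    -- (b)
    (h < k →
      (∀ α : Fin k → F, (∃ i : Fin k, h ≤ (i : ℕ) ∧ α i ≠ 0) →
        (Nat.card {P : Fin k → F // P ∈ D4 ∧ ∑ i, α i * P i ≠ 0} : ℤ)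
          = (n : ℤ) - (q : ℤ) ^ (k - 1) + (q : ℤ) ^ (k - h - 1) * ((q : ℤ) - 1) ^ h + 1)
      ∧ Nat.card {α : Fin k → F // ∃ i : Fin k, h ≤ (i : ℕ) ∧ α i ≠ 0} = q ^ k - q ^ h)
    ∧
    -- (c)
    (∀ s : ℕ, 1 ≤ s → s ≤ h →
      (∀ α : Fin k → F, (∀ m : Fin k, h ≤ (m : ℕ) → α m = 0) →
        Nat.card {i : Fin k // (i : ℕ) < h ∧ α i ≠ 0} = s →
        (Nat.card {P : Fin k → F // P ∈ D4 ∧ ∑ i, α i * P i ≠ 0} : ℤ)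
          = (n : ℤ) - (q : ℤ) ^ (k - 1)
              + (q : ℤ) ^ (k - h) * ((q : ℤ) - 1) ^ (h - s) * psi q s + 1)
      ∧ Nat.card {α : Fin k → F // (∀ m : Fin k, h ≤ (m : ℕ) → α m = 0) ∧
          Nat.card {i : Fin k // (i : ℕ) < h ∧ α i ≠ 0} = s}
        = Nat.choose h s * (q - 1) ^ s) := by
  have hcode := stmt17_general hF (Fintype.card_fin k) (J := univ.map (Fin.castLEEmb hhk)) (h := h)
    (by simp) (by omega) (by simp [hD4]) hn
  simp only [mem_map_castLEEmb_univ, not_lt] at hcode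
  obtain ⟨hlength, hweight_off, hcard_off, hweight_on, hcard_on⟩ := hcode
  exact ⟨hlength, fun _ => ⟨hweight_off, hcard_off⟩,
    fun s hs _ => ⟨hweight_on s hs, hcard_on s⟩⟩
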